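/- arXiv:2009.05842 — 2 statements merged into one kernel-verified Lean document; each statement's English description precedes it below -/
import Mathlib

section
/- Suppose there exists no zero-curvature generalized decorated metric, i.e. no l ∈ ℝ^E with K̃(l) = 0. Then every solution l : [0,∞) → ℝ^E of the extended combinatorial Ricci flow diverges to infinity in subsequence: there exists a sequence t_n → ∞ with ‖l(t_n)‖ → ∞ as n → ∞. -/
noncomputable section

open Real Set Filter

/-- The generalized Euclidean triangle angle `aᵢ(x)` opposite the side of length `x i`,
for a generalized triangle with (positive) side lengths `x 0, x 1, x 2`:
it is `π` if `x i ≥ x j + x k`, `0` if some other side is at least the sum of the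
remaining two, and otherwise the usual Euclidean angle `arccos((xⱼ²+x_k²−xᵢ²)/(2xⱼx_k))`. -/
noncomputable def genAngle (x : Fin 3 → ℝ) (i : Fin 3) : ℝ :=
  if x (i + 1) + x (i + 2) ≤ x i then Real.pi
  else if x i + x (i + 2) ≤ x (i + 1) ∨ x i + x (i + 1) ≤ x (i + 2) then 0
  else Real.arccos
    ((x (i + 1) ^ 2 + x (i + 2) ^ 2 - x i ^ 2) / (2 * x (i + 1) * x (i + 2)))

/-- The three side lengths `e^{(l₁₂+l₃₄)/2}, e^{(l₁₃+l₂₄)/2}, e^{(l₁₄+l₂₃)/2}` of the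
generalized Euclidean triangle associated to a length vector `l ∈ ℝ⁶`.
Edge indices: `0 ↔ {1,2}, 1 ↔ {1,3}, 2 ↔ {1,4}, 3 ↔ {2,3}, 4 ↔ {2,4}, 5 ↔ {3,4}`,
so opposite pairs of edges are `(0,5), (1,4), (2,3)`. -/
noncomputable def triSides (l : Fin 6 → ℝ) (k : Fin 3) : ℝ :=
  if k.val = 0 then Real.exp ((l 0 + l 5) / 2)
  else if k.val = 1 then Real.exp ((l 1 + l 4) / 2)
  else Real.exp ((l 2 + l 3) / 2)

/-- The quad (pair of opposite edges) containing the edge `p`. -/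
def quadIndex (p : Fin 6) : Fin 3 :=
  if p.val = 0 ∨ p.val = 5 then 0 else if p.val = 1 ∨ p.val = 4 then 1 else 2

/-- The extended dihedral angle `α_p(l)` of the generalized decorated tetrahedron with
length vector `l ∈ ℝ⁶` at the edge `p`. -/
noncomputable def dihedral (l : Fin 6 → ℝ) (p : Fin 6) : ℝ :=
  genAngle (triSides l) (quadIndex p)

/-- The edge index in `Fin 6` of the edge `{i,j}` of the tetrahedron on vertices `Fin 4`
(junk value for `i = j`). -/
def edgeOf (i j : Fin 4) : Fin 6 :=
  if (i.val = 0 ∧ j.val = 1) ∨ (i.val = 1 ∧ j.val = 0) then 0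
  else if (i.val = 0 ∧ j.val = 2) ∨ (i.val = 2 ∧ j.val = 0) then 1
  else if (i.val = 0 ∧ j.val = 3) ∨ (i.val = 3 ∧ j.val = 0) then 2
  else if (i.val = 1 ∧ j.val = 2) ∨ (i.val = 2 ∧ j.val = 1) then 3
  else if (i.val = 1 ∧ j.val = 3) ∨ (i.val = 3 ∧ j.val = 1) then 4
  else 5

/-- The two endpoints of the edge `p` of the tetrahedron. -/
def endPts (p : Fin 6) : Fin 4 × Fin 4 :=
  if p.val = 0 then (0, 1) else if p.val = 1 then (0, 2) else if p.val = 2 then (0, 3)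
  else if p.val = 3 then (1, 2) else if p.val = 4 then (1, 3) else (2, 3)

/-- The Lobachevsky function `Λ(x) = −∫₀ˣ ln|2 sin t| dt`. -/
noncomputable def lob (x : ℝ) : ℝ := -∫ t in (0:ℝ)..x, Real.log |2 * Real.sin t|

/-- The volume of the generalized decorated tetrahedron with length vector `l`. -/
noncomputable def vol6 (l : Fin 6 → ℝ) : ℝ := (1 / 2 : ℝ) * ∑ p : Fin 6, lob (dihedral l p)

/-- The co-volume function `cov(l) = 2 vol(l) + Σ α_p(l) l_p` on `ℝ⁶`. -/
noncomputable def cov6 (l : Fin 6 → ℝ) : ℝ := 2 * vol6 l + ∑ p : Fin 6, dihedral l p * l p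

/-- `𝓛 ⊂ ℝ⁶`: length vectors of genuine decorated ideal hyperbolic tetrahedra, i.e. those
whose associated generalized Euclidean triangle satisfies the strict triangle inequalities. -/
def Ldom : Set (Fin 6 → ℝ) :=
  {l | ∀ i : Fin 3, triSides l i < triSides l (i + 1) + triSides l (i + 2)}

/-- The action of `w ∈ ℝ⁴` on `l ∈ ℝ⁶`: `(w + l)_{ij} = l_{ij} + wᵢ + wⱼ`. -/
def act (w : Fin 4 → ℝ) (l : Fin 6 → ℝ) : Fin 6 → ℝ :=
  fun p => l p + w (endPts p).1 + w (endPts p).2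

/-- `ℝ̂⁴ = {w + 0 : w ∈ ℝ⁴} ⊂ ℝ⁶`. -/
def hatR4 : Set (Fin 6 → ℝ) := {x | ∃ w : Fin 4 → ℝ, x = act w 0}

/-- `i, j, k, h` are pairwise distinct, i.e. `{i,j,k,h} = {1,2,3,4}`. -/
def Distinct4 (i j k h : Fin 4) : Prop :=
  i ≠ j ∧ i ≠ k ∧ i ≠ h ∧ j ≠ k ∧ j ≠ h ∧ k ≠ h

variable {T E : Type*}

/-- The length vector in `ℝ⁶` induced on the tetrahedron `σ` by a metric `l : E → ℝ`. -/
def pullback (glue : T → Fin 6 → E) (l : E → ℝ) (σ : T) : Fin 6 → ℝ :=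
  fun p => l (glue σ p)

/-- The generalized Ricci curvature `K̃_e(l) = 2π − Σ_{σ} Σ_{p : glue σ p = e} α_p(l_σ)`. -/
noncomputable def Ric [Fintype T] [DecidableEq E] (glue : T → Fin 6 → E) (l : E → ℝ)
    (e : E) : ℝ :=
  2 * Real.pi -
    ∑ σ : T, ∑ p : Fin 6, if glue σ p = e then dihedral (pullback glue l σ) p else 0

/-- `𝓛(M,𝒯)`: the set of decorated hyperbolic polyhedral metrics. -/
def LMdom (glue : T → Fin 6 → E) : Set (E → ℝ) := {l | ∀ σ : T, pullback glue l σ ∈ Ldom}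

/-- `H̃(l) = Σ_σ cov(l_σ) − 2π Σ_e l_e`. -/
noncomputable def Htilde [Fintype T] [Fintype E] (glue : T → Fin 6 → E) (l : E → ℝ) : ℝ :=
  ∑ σ : T, cov6 (pullback glue l σ) - 2 * Real.pi * ∑ e : E, l e

/-- The valence `d_e` of an edge `e`: the number of pairs `(σ, p)` glued to `e`. -/
def valence [Fintype T] [DecidableEq E] (glue : T → Fin 6 → E) (e : E) : ℕ :=
  ∑ σ : T, ∑ p : Fin 6, if glue σ p = e then 1 else 0

/-- `(M,𝒯)` is edge-transitive: any edge can be mapped to any other edge by an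
automorphism of the triangulation. -/
def EdgeTransitive (glue : T → Fin 6 → E) : Prop :=
  ∀ e e' : E, ∃ (φ : T ≃ T) (ψ : E ≃ E) (ρ : T → Fin 4 ≃ Fin 4),
    (∀ (σ : T) (i j : Fin 4), i ≠ j →
      glue (φ σ) (edgeOf (ρ σ i) (ρ σ j)) = ψ (glue σ (edgeOf i j))) ∧ ψ e = e'

/-- The angle opposite to `x`, with `arccos` clamping in degenerate cases. -/
def ang (x y z : ℝ) : ℝ := Real.arccos ((y ^ 2 + z ^ 2 - x ^ 2) / (2 * y * z))

lemma ang_pi {x y z : ℝ} (hy : 0 < y) (hz : 0 < z) (h : y + z ≤ x) : ang x y z = π := by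
  unfold ang
  apply Real.arccos_of_le_neg_one
  rw [div_le_iff₀ (by positivity)]
  nlinarith

lemma ang_zero {x y z : ℝ} (hx : 0 < x) (hy : 0 < y) (hz : 0 < z) (h : x + z ≤ y) :
    ang x y z = 0 := by
  unfold ang
  apply Real.arccos_of_one_le
  rw [le_div_iff₀ (by positivity)]
  nlinarith

lemma ang_comm (x y z : ℝ) : ang x y z = ang x z y := by
  unfold ang
  congr 1
  ring

lemma genAngle_eq (x : Fin 3 → ℝ) (hx : ∀ i, 0 < x i) (i : Fin 3) :
    genAngle x i = ang (x i) (x (i + 1)) (x (i + 2)) := by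
  unfold genAngle
  split_ifs with h1 h2
  · exact (ang_pi (hx _) (hx _) h1).symm
  · rcases h2 with h | h
    · exact (ang_zero (hx _) (hx _) (hx _) h).symm
    · rw [ang_comm]
      exact (ang_zero (hx _) (hx _) (hx _) h).symm
  · rfl

/-- Nondegenerate triangle data: angles and logarithms of sides. -/
def TriInt (A B C u v w : ℝ) : Prop :=
  0 < A ∧ 0 < B ∧ 0 < C ∧ A + B + C = π ∧ ∃ κ : ℝ,
    u = Real.log (Real.sin A) + κ ∧ v = Real.log (Real.sin B) + κ ∧
    w = Real.log (Real.sin C) + κ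

/-- Degenerate triangle data. -/
def TriDeg (A B C u v w : ℝ) : Prop :=
  A = π ∧ B = 0 ∧ C = 0 ∧ Real.exp v + Real.exp w ≤ Real.exp u

lemma sin_ang {x y z : ℝ} (hx : 0 < x) (hy : 0 < y) (hz : 0 < z) :
    Real.sin (ang x y z) =
      x * (Real.sqrt ((x + y + z) * (x + y - z) * (x + z - y) * (y + z - x)) / (2 * x * y * z)) := by
  unfold ang
  rw [Real.sin_arccos]
  have : 1 - ((y ^ 2 + z ^ 2 - x ^ 2) / (2 * y * z)) ^ 2 =
      ((x + y + z) * (x + y - z) * (x + z - y) * (y + z - x)) / (2 * y * z) ^ 2 := by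
    field_simp
    ring
  rw [this, Real.sqrt_div' _ (by positivity), Real.sqrt_sq (by positivity)]
  field_simp

lemma cos_ang {x y z : ℝ} (hx : 0 < x) (hy : 0 < y) (hz : 0 < z)
    (h1 : x < y + z) (h2 : y < x + z) (h3 : z < x + y) :
    Real.cos (ang x y z) = (y ^ 2 + z ^ 2 - x ^ 2) / (2 * y * z) := by
  unfold ang
  rw [Real.cos_arccos]
  · rw [le_div_iff₀ (by positivity)]
    nlinarith
  · rw [div_le_iff₀ (by positivity)]
    nlinarith

lemma tri_int {x y z : ℝ} (hx : 0 < x) (hy : 0 < y) (hz : 0 < z)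
    (h1 : x < y + z) (h2 : y < x + z) (h3 : z < x + y) :
    TriInt (ang x y z) (ang y z x) (ang z x y) (Real.log x) (Real.log y) (Real.log z) := by
  have cA := cos_ang hx hy hz h1 h2 h3
  have cB := cos_ang hy hz hx (by linarith) (by linarith) (by linarith)
  have cC := cos_ang hz hx hy (by linarith) (by linarith) (by linarith)
  have sA := sin_ang hx hy hz
  have sB := sin_ang hy hz hx
  have sC := sin_ang hz hx hy
  have hS : 0 < (x + y + z) * (x + y - z) * (x + z - y) * (y + z - x) := by
    have : 0 < x + y - z := by linarith
    have : 0 < x + z - y := by linarith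
    have : 0 < y + z - x := by linarith
    positivity
  have e1 : (y + z + x) * (y + z - x) * (y + x - z) * (z + x - y) =
    (x + y + z) * (x + y - z) * (x + z - y) * (y + z - x) := by ring
  have e2 : (z + x + y) * (z + x - y) * (z + y - x) * (x + y - z) =
    (x + y + z) * (x + y - z) * (x + z - y) * (y + z - x) := by ring
  rw [e1, show 2 * y * z * x = 2 * x * y * z by ring] at sB
  rw [e2, show 2 * z * x * y = 2 * x * y * z by ring] at sC
  have hk2 : (Real.sqrt ((x + y + z) * (x + y - z) * (x + z - y) * (y + z - x)) / (2 * x * y * z)) ^ 2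
     = ((x + y + z) * (x + y - z) * (x + z - y) * (y + z - x)) / (2 * x * y * z) ^ 2 := by
    rw [div_pow, Real.sq_sqrt hS.le]
  have hk : 0 < Real.sqrt ((x + y + z) * (x + y - z) * (x + z - y) * (y + z - x)) / (2 * x * y * z) := by
    positivity
  set k := Real.sqrt ((x + y + z) * (x + y - z) * (x + z - y) * (y + z - x)) / (2 * x * y * z)
    with hkdef
  have pos : ∀ a b c : ℝ, 0 < Real.sin (ang a b c) → 0 < ang a b c := by
    intro a b c h
    rcases (Real.arccos_nonneg ((b ^ 2 + c ^ 2 - a ^ 2) / (2 * b * c))).lt_or_eq with h' | h'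
    · exact h'
    · have : ang a b c = 0 := h'.symm
      rw [this, Real.sin_zero] at h
      exact absurd h (lt_irrefl _)
  have pA := pos _ _ _ (by rw [sA]; positivity)
  have pB := pos _ _ _ (by rw [sB]; positivity)
  have pC := pos _ _ _ (by rw [sC]; positivity)
  have lA : ang x y z ≤ π := Real.arccos_le_pi _
  have lB : ang y z x ≤ π := Real.arccos_le_pi _
  have lC : ang z x y ≤ π := Real.arccos_le_pi _
  have sAB : Real.sin (ang x y z + ang y z x) = k * z := by
    rw [Real.sin_add, sA, sB, cA, cB]
    field_simp
    ring
  have hlt : ang x y z + ang y z x < π := by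
    by_contra hcon
    push Not at hcon
    have h0 : 0 ≤ Real.sin (ang x y z + ang y z x - π) :=
      Real.sin_nonneg_of_nonneg_of_le_pi (by linarith) (by linarith)
    rw [Real.sin_sub_pi, sAB] at h0
    have : 0 < k * z := by positivity
    linarith
  have cAB : Real.cos (ang x y z + ang y z x) = Real.cos (π - ang z x y) := by
    rw [Real.cos_add, Real.cos_pi_sub, sA, sB, cA, cB, cC]
    have : x * k * (y * k) = x * y * k ^ 2 := by ring
    rw [this, hk2]
    field_simp
    ring
  have hsum := Real.injOn_cos ⟨by linarith, by linarith⟩ ⟨by linarith, by linarith⟩ cAB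
  refine ⟨pA, pB, pC, by linarith, -Real.log k, ?_, ?_, ?_⟩
  · rw [sA, Real.log_mul hx.ne' hk.ne']; ring
  · rw [sB, Real.log_mul hy.ne' hk.ne']; ring
  · rw [sC, Real.log_mul hz.ne' hk.ne']; ring

lemma tri_cases (u v w : ℝ) (A B C : ℝ)
    (hA : A = ang (Real.exp u) (Real.exp v) (Real.exp w))
    (hB : B = ang (Real.exp v) (Real.exp w) (Real.exp u))
    (hC : C = ang (Real.exp w) (Real.exp u) (Real.exp v)) :
    TriInt A B C u v w ∨ TriDeg A B C u v w ∨ TriDeg B C A v w u ∨ TriDeg C A B w u v := by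
  have hx := Real.exp_pos u
  have hy := Real.exp_pos v
  have hz := Real.exp_pos w
  have deg : ∀ x y z : ℝ, 0 < x → 0 < y → 0 < z → y + z ≤ x →
      ang x y z = π ∧ ang y z x = 0 ∧ ang z x y = 0 := by
    intro x y z hx hy hz h
    exact ⟨ang_pi hy hz h, by rw [ang_comm]; exact ang_zero hy hx hz h,
      ang_zero hz hx hy (by linarith)⟩
  subst hA hB hC
  by_cases h1 : Real.exp v + Real.exp w ≤ Real.exp u
  · obtain ⟨a, b, c⟩ := deg _ _ _ hx hy hz h1
    exact Or.inr (Or.inl ⟨a, b, c, h1⟩)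
  by_cases h2 : Real.exp w + Real.exp u ≤ Real.exp v
  · obtain ⟨a, b, c⟩ := deg _ _ _ hy hz hx h2
    exact Or.inr (Or.inr (Or.inl ⟨a, b, c, h2⟩))
  by_cases h3 : Real.exp u + Real.exp v ≤ Real.exp w
  · obtain ⟨a, b, c⟩ := deg _ _ _ hz hx hy h3
    exact Or.inr (Or.inr (Or.inr ⟨a, b, c, h3⟩))
  left
  have := tri_int hx hy hz (by linarith) (by linarith) (by linarith)
  simpa only [Real.log_exp] using this

lemma cot_form {a b c p q r : ℝ} (ha : 0 < a) (hb : 0 < b) (hc : 0 < c) (h : a + b + c = π)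
    (hr : p + q + r = 0) :
    0 ≤ p ^ 2 * (Real.cos a / Real.sin a) + q ^ 2 * (Real.cos b / Real.sin b) +
      r ^ 2 * (Real.cos c / Real.sin c) := by
  have sa : 0 < Real.sin a := Real.sin_pos_of_pos_of_lt_pi ha (by linarith)
  have sb : 0 < Real.sin b := Real.sin_pos_of_pos_of_lt_pi hb (by linarith)
  have sc : 0 < Real.sin c := Real.sin_pos_of_pos_of_lt_pi hc (by linarith)
  have hr' : r = -(p + q) := by linarith
  have hc' : c = π - (a + b) := by linarith
  have e1 : Real.cos c = Real.sin a * Real.sin b - Real.cos a * Real.cos b := by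
    rw [hc', Real.cos_pi_sub, Real.cos_add, neg_sub]
  have e2 : Real.sin c = Real.sin a * Real.cos b + Real.cos a * Real.sin b := by
    rw [hc', Real.sin_pi_sub, Real.sin_add]
  have key : p ^ 2 * (Real.cos a / Real.sin a) + q ^ 2 * (Real.cos b / Real.sin b) +
      r ^ 2 * (Real.cos c / Real.sin c) =
      ((Real.cos a * Real.sin b * p - Real.cos b * Real.sin a * q) ^ 2 +
        (Real.sin a * Real.sin b * (p + q)) ^ 2) / (Real.sin a * Real.sin b * Real.sin c) := by
    rw [hr', e1]
    field_simp
    rw [e2]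
    ring
  rw [key]
  positivity

lemma mono_int_sin {A B C A' B' C' : ℝ} (hA : 0 < A) (hB : 0 < B) (hC : 0 < C)
    (hA' : 0 < A') (hB' : 0 < B') (hC' : 0 < C') (h : A + B + C = π) (h' : A' + B' + C' = π) :
    0 ≤ (A - A') * (Real.log (Real.sin A) - Real.log (Real.sin A')) +
      (B - B') * (Real.log (Real.sin B) - Real.log (Real.sin B')) +
      (C - C') * (Real.log (Real.sin C) - Real.log (Real.sin C')) := by
  have pos : ∀ X Y s : ℝ, 0 < X → 0 < Y → s ∈ Icc (0:ℝ) 1 → 0 < Y + s * (X - Y) := by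
    intro X Y s hX hY hs
    have := hs.1
    have := hs.2
    rcases le_or_gt X Y with h | h
    · nlinarith
    · nlinarith
  have hd : ∀ X Y s : ℝ, Real.sin (Y + s * (X - Y)) ≠ 0 →
      HasDerivAt (fun s => (X - Y) * Real.log (Real.sin (Y + s * (X - Y))))
        ((X - Y) ^ 2 * (Real.cos (Y + s * (X - Y)) / Real.sin (Y + s * (X - Y)))) s := by
    intro X Y s hs
    have h1 : HasDerivAt (fun s : ℝ => Y + s * (X - Y)) (X - Y) s := by
      simpa using ((hasDerivAt_id s).mul_const (X - Y)).const_add Y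
    have h2 := (h1.sin.log hs).const_mul (X - Y)
    have e : (X - Y) ^ 2 * (Real.cos (Y + s * (X - Y)) / Real.sin (Y + s * (X - Y))) =
        (X - Y) * (Real.cos (Y + s * (X - Y)) * (X - Y) / Real.sin (Y + s * (X - Y))) := by ring
    rw [e]
    exact h2
  have hder : ∀ s ∈ Icc (0:ℝ) 1, HasDerivAt (fun s =>
      (A - A') * Real.log (Real.sin (A' + s * (A - A'))) +
      (B - B') * Real.log (Real.sin (B' + s * (B - B'))) +
      (C - C') * Real.log (Real.sin (C' + s * (C - C'))))
      ((A - A') ^ 2 * (Real.cos (A' + s * (A - A')) / Real.sin (A' + s * (A - A'))) +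
      (B - B') ^ 2 * (Real.cos (B' + s * (B - B')) / Real.sin (B' + s * (B - B'))) +
      (C - C') ^ 2 * (Real.cos (C' + s * (C - C')) / Real.sin (C' + s * (C - C')))) s := by
    intro s hs
    have a := pos A A' s hA hA' hs
    have b := pos B B' s hB hB' hs
    have c := pos C C' s hC hC' hs
    have e : (A' + s * (A - A')) + (B' + s * (B - B')) + (C' + s * (C - C')) = π := by
      linear_combination (1 - s) * h' + s * h
    exact ((hd A A' s (Real.sin_pos_of_pos_of_lt_pi a (by linarith)).ne').add
      (hd B B' s (Real.sin_pos_of_pos_of_lt_pi b (by linarith)).ne')).add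
      (hd C C' s (Real.sin_pos_of_pos_of_lt_pi c (by linarith)).ne')
  have hmono := monotoneOn_of_hasDerivWithinAt_nonneg (convex_Icc (0:ℝ) 1)
    (fun s hs => (hder s hs).continuousAt.continuousWithinAt)
    (fun s hs => (hder s (interior_subset hs)).hasDerivWithinAt)
    (fun s hs => by
      have hs := interior_subset hs
      exact cot_form (pos A A' s hA hA' hs) (pos B B' s hB hB' hs) (pos C C' s hC hC' hs)
        (by linear_combination (1 - s) * h' + s * h) (by linarith))
  have := hmono (left_mem_Icc.2 zero_le_one) (right_mem_Icc.2 zero_le_one) zero_le_one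
  simp only [zero_mul, add_zero, one_mul, add_sub_cancel] at this
  linarith

lemma mono_II {A B C u v w A' B' C' u' v' w' : ℝ} (h : TriInt A B C u v w)
    (h' : TriInt A' B' C' u' v' w') :
    0 ≤ (A - A') * (u - u') + (B - B') * (v - v') + (C - C') * (w - w') := by
  obtain ⟨a, b, c, s, κ, rfl, rfl, rfl⟩ := h
  obtain ⟨a', b', c', s', κ', rfl, rfl, rfl⟩ := h'
  have := mono_int_sin a b c a' b' c' s s'
  have e : C - C' = -(A - A') - (B - B') := by linarith
  rw [e] at this ⊢
  linarith

lemma sin_ratio {B C : ℝ} (hB : 0 < B) (hC : 0 < C) (h : B + C ≤ π) :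
    B * Real.sin (B + C) ≤ (B + C) * Real.sin B := by
  have m1 : B + C ∈ Icc 0 π := ⟨by linarith, h⟩
  have m2 : (0:ℝ) ∈ Icc 0 π := ⟨le_rfl, Real.pi_pos.le⟩
  have n1 : 0 ≤ B / (B + C) := by positivity
  have n2 : 0 ≤ C / (B + C) := by positivity
  have := strictConcaveOn_sin_Icc.concaveOn.2 m1 m2 n1 n2 (by field_simp)
  simp only [smul_eq_mul, Real.sin_zero, mul_zero, add_zero] at this
  rw [div_mul_cancel₀ _ (by positivity), div_mul_eq_mul_div, div_le_iff₀ (by positivity)] at this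
  linarith

lemma mono_DI {A B C u v w A' B' C' u' v' w' : ℝ} (h : TriDeg A B C u v w)
    (h' : TriInt A' B' C' u' v' w') :
    0 ≤ (A - A') * (u - u') + (B - B') * (v - v') + (C - C') * (w - w') := by
  obtain ⟨rfl, rfl, rfl, hd⟩ := h
  obtain ⟨a', b', c', s', κ', rfl, rfl, rfl⟩ := h'
  have sA : 0 < Real.sin A' := Real.sin_pos_of_pos_of_lt_pi a' (by linarith)
  have sB : 0 < Real.sin B' := Real.sin_pos_of_pos_of_lt_pi b' (by linarith)
  have sC : 0 < Real.sin C' := Real.sin_pos_of_pos_of_lt_pi c' (by linarith)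
  have eA : Real.sin A' = Real.sin (B' + C') := by
    rw [← Real.sin_pi_sub]; congr 1; linarith
  have key : ∀ X Y t : ℝ, 0 < X → 0 < Y → B' + C' = X + Y → 0 < Real.sin X →
      X * (t - u - (Real.log (Real.sin X) - Real.log (Real.sin A'))) ≤
        (B' + C') * Real.exp (t - u) - X := by
    intro X Y t hX hY hXY sX
    have h1 := Real.add_one_le_exp (t - u - (Real.log (Real.sin X) - Real.log (Real.sin A')))
    have h2 : Real.exp (t - u - (Real.log (Real.sin X) - Real.log (Real.sin A'))) =
        Real.exp (t - u) * (Real.sin A' / Real.sin X) := by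
      rw [Real.exp_sub _ (Real.log _ - _), Real.exp_sub (Real.log _), Real.exp_log sX,
        Real.exp_log sA]
      field_simp
    have h3 : X * (Real.sin A' / Real.sin X) ≤ B' + C' := by
      rw [mul_div_assoc', div_le_iff₀ sX, eA, hXY]
      exact sin_ratio hX hY (by linarith)
    rw [h2] at h1
    have h4 := mul_le_mul_of_nonneg_left h3 (Real.exp_pos (t - u)).le
    have h5 := mul_le_mul_of_nonneg_left h1 hX.le
    nlinarith
  have kB := key B' C' v b' c' rfl sB
  have kC := key C' B' w c' b' (by ring) sC
  have hs : Real.exp (v - u) + Real.exp (w - u) ≤ 1 := by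
    rw [Real.exp_sub, Real.exp_sub, ← add_div, div_le_one (Real.exp_pos u)]
    exact hd
  have hs' := mul_le_mul_of_nonneg_left hs (by linarith : 0 ≤ B' + C')
  have e : π - A' = B' + C' := by linarith
  rw [e]
  nlinarith

lemma mono_DD1 {A B C u v w A' B' C' u' v' w' : ℝ} (h : TriDeg A B C u v w)
    (h' : TriDeg A' B' C' u' v' w') :
    0 ≤ (A - A') * (u - u') + (B - B') * (v - v') + (C - C') * (w - w') := by
  obtain ⟨rfl, rfl, rfl, hd⟩ := h
  obtain ⟨rfl, rfl, rfl, hd'⟩ := h'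
  simp

lemma mono_DD2 {A B C u v w A' B' C' u' v' w' : ℝ} (h : TriDeg A B C u v w)
    (h' : TriDeg B' C' A' v' w' u') :
    0 ≤ (A - A') * (u - u') + (B - B') * (v - v') + (C - C') * (w - w') := by
  obtain ⟨rfl, rfl, rfl, hd⟩ := h
  obtain ⟨rfl, rfl, rfl, hd'⟩ := h'
  have h1 : v ≤ u := by
    rw [← Real.exp_le_exp]; linarith [Real.exp_pos w]
  have h2 : u' ≤ v' := by
    rw [← Real.exp_le_exp]; linarith [Real.exp_pos w']
  nlinarith [Real.pi_pos, mul_nonneg Real.pi_pos.le (sub_nonneg.2 h1),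
    mul_nonneg Real.pi_pos.le (sub_nonneg.2 h2)]

lemma mono_tri (u v w u' v' w' : ℝ) (A B C A' B' C' : ℝ)
    (hA : A = ang (Real.exp u) (Real.exp v) (Real.exp w))
    (hB : B = ang (Real.exp v) (Real.exp w) (Real.exp u))
    (hC : C = ang (Real.exp w) (Real.exp u) (Real.exp v))
    (hA' : A' = ang (Real.exp u') (Real.exp v') (Real.exp w'))
    (hB' : B' = ang (Real.exp v') (Real.exp w') (Real.exp u'))
    (hC' : C' = ang (Real.exp w') (Real.exp u') (Real.exp v')) :
    0 ≤ (A - A') * (u - u') + (B - B') * (v - v') + (C - C') * (w - w') := by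
  rcases tri_cases u v w A B C hA hB hC with h | h | h | h <;>
  rcases tri_cases u' v' w' A' B' C' hA' hB' hC' with h' | h' | h' | h'
  · exact mono_II h h'
  · linarith [mono_DI h' h]
  · have := mono_DI h' ⟨h.2.1, h.2.2.1, h.1, by linarith [h.2.2.2.1],
      h.2.2.2.2.imp fun κ hκ => ⟨hκ.2.1, hκ.2.2, hκ.1⟩⟩
    linarith
  · have := mono_DI h' ⟨h.2.2.1, h.1, h.2.1, by linarith [h.2.2.2.1],
      h.2.2.2.2.imp fun κ hκ => ⟨hκ.2.2, hκ.1, hκ.2.1⟩⟩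
    linarith
  · exact mono_DI h h'
  · exact mono_DD1 h h'
  · exact mono_DD2 h h'
  · linarith [mono_DD2 h' h]
  · have := mono_DI h ⟨h'.2.1, h'.2.2.1, h'.1, by linarith [h'.2.2.2.1],
      h'.2.2.2.2.imp fun κ hκ => ⟨hκ.2.1, hκ.2.2, hκ.1⟩⟩
    linarith
  · linarith [mono_DD2 h' h]
  · linarith [mono_DD1 h h']
  · linarith [mono_DD2 h h']
  · have := mono_DI h ⟨h'.2.2.1, h'.1, h'.2.1, by linarith [h'.2.2.2.1],
      h'.2.2.2.2.imp fun κ hκ => ⟨hκ.2.2, hκ.1, hκ.2.1⟩⟩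
    linarith
  · linarith [mono_DD2 h h']
  · linarith [mono_DD2 h' h]
  · linarith [mono_DD1 h h']

lemma triSides_pos (l : Fin 6 → ℝ) (k : Fin 3) : 0 < triSides l k := by
  unfold triSides
  split_ifs <;> exact Real.exp_pos _

lemma dihedral_eq (l : Fin 6 → ℝ) (p : Fin 6) : dihedral l p =
    ang (triSides l (quadIndex p)) (triSides l (quadIndex p + 1)) (triSides l (quadIndex p + 2)) :=
  genAngle_eq _ (triSides_pos l) _

lemma dihedral_mono (l m : Fin 6 → ℝ) :
    0 ≤ ∑ p : Fin 6, (dihedral l p - dihedral m p) * (l p - m p) := by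
  have h := mono_tri ((l 0 + l 5) / 2) ((l 1 + l 4) / 2) ((l 2 + l 3) / 2)
    ((m 0 + m 5) / 2) ((m 1 + m 4) / 2) ((m 2 + m 3) / 2) _ _ _ _ _ _ rfl rfl rfl rfl rfl rfl
  have s0 : ∀ l : Fin 6 → ℝ, triSides l 0 = Real.exp ((l 0 + l 5) / 2) := fun l => by
    simp [triSides]
  have s1 : ∀ l : Fin 6 → ℝ, triSides l 1 = Real.exp ((l 1 + l 4) / 2) := fun l => by
    simp [triSides]
  have s2 : ∀ l : Fin 6 → ℝ, triSides l 2 = Real.exp ((l 2 + l 3) / 2) := fun l => by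
    simp [triSides]
  simp only [← s0, ← s1, ← s2] at h
  have d0 : ∀ l : Fin 6 → ℝ, ∀ p : Fin 6, quadIndex p = 0 →
      dihedral l p = ang (triSides l 0) (triSides l 1) (triSides l 2) := fun l p hp => by
    rw [dihedral_eq, hp]; rfl
  have d1 : ∀ l : Fin 6 → ℝ, ∀ p : Fin 6, quadIndex p = 1 →
      dihedral l p = ang (triSides l 1) (triSides l 2) (triSides l 0) := fun l p hp => by
    rw [dihedral_eq, hp]; rfl
  have d2 : ∀ l : Fin 6 → ℝ, ∀ p : Fin 6, quadIndex p = 2 →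
      dihedral l p = ang (triSides l 2) (triSides l 0) (triSides l 1) := fun l p hp => by
    rw [dihedral_eq, hp]; rfl
  simp only [Fin.sum_univ_six]
  rw [d0 l 0 (by decide), d0 l 5 (by decide), d1 l 1 (by decide), d1 l 4 (by decide),
    d2 l 2 (by decide), d2 l 3 (by decide), d0 m 0 (by decide), d0 m 5 (by decide),
    d1 m 1 (by decide), d1 m 4 (by decide), d2 m 2 (by decide), d2 m 3 (by decide)]
  linarith

lemma continuous_dihedral (p : Fin 6) : Continuous fun l : Fin 6 → ℝ => dihedral l p := by
  have hs : ∀ k, Continuous fun l : Fin 6 → ℝ => triSides l k := by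
    intro k
    unfold triSides
    split_ifs <;> fun_prop
  simp only [dihedral_eq]
  unfold ang
  refine Real.continuous_arccos.comp (Continuous.div ?_ ?_ ?_)
  · exact (((hs _).pow 2).add ((hs _).pow 2)).sub ((hs _).pow 2)
  · exact (continuous_const.mul (hs _)).mul (hs _)
  · intro l
    have := triSides_pos l (quadIndex p + 1)
    have := triSides_pos l (quadIndex p + 2)
    positivity

lemma continuous_Ric [Fintype T] [DecidableEq E] (glue : T → Fin 6 → E) :
    Continuous (Ric glue) := by
  refine continuous_pi fun e => ?_
  unfold Ric
  refine continuous_const.sub (continuous_finsetSum _ fun σ _ => continuous_finsetSum _ fun p _ => ?_)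
  split_ifs
  · refine (continuous_dihedral p).comp ?_
    unfold pullback
    fun_prop
  · exact continuous_const

lemma Ric_mono [Fintype T] [Fintype E] [DecidableEq E] (glue : T → Fin 6 → E) (x y : E → ℝ) :
    ∑ e, Ric glue x e * (x e - y e) ≤ ∑ e, Ric glue y e * (x e - y e) := by
  have h : ∀ z : E → ℝ, ∑ e, Ric glue z e * (x e - y e) =
      2 * π * ∑ e, (x e - y e) - ∑ σ : T, ∑ p : Fin 6, dihedral (pullback glue z σ) p *
        (pullback glue x σ p - pullback glue y σ p) := by
    intro z
    unfold Ric
    simp only [sub_mul, Finset.sum_sub_distrib, ← Finset.mul_sum]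
    congr 1
    simp only [Finset.sum_mul]
    rw [Finset.sum_comm]
    refine Finset.sum_congr rfl fun σ _ => ?_
    rw [Finset.sum_comm]
    refine Finset.sum_congr rfl fun p _ => ?_
    simp [ite_mul, pullback]
  rw [h, h]
  have : 0 ≤ ∑ σ : T, ∑ p : Fin 6, (dihedral (pullback glue x σ) p - dihedral (pullback glue y σ) p) *
        (pullback glue x σ p - pullback glue y σ p) :=
    Finset.sum_nonneg fun σ _ => dihedral_mono _ _
  simp only [sub_mul, Finset.sum_sub_distrib] at this
  simp only [Finset.sum_sub_distrib]
  linarith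

/-- if there is no zero-curvature generalized decorated metric, then every
solution of the extended combinatorial Ricci flow diverges to infinity in subsequence. -/
theorem extended_ricci_flow_diverges_of_no_zero_curvature
    [Fintype T] [Fintype E] [DecidableEq E] [Nonempty T] (glue : T → Fin 6 → E)
    (hno : ¬∃ l : E → ℝ, ∀ e : E, Ric glue l e = 0)
    (l : ℝ → E → ℝ) (hflow : ∀ t : ℝ, 0 ≤ t → HasDerivAt l (Ric glue (l t)) t) :
    ∃ tn : ℕ → ℝ, Filter.Tendsto tn Filter.atTop Filter.atTop ∧
      Filter.Tendsto (fun n => ‖l (tn n)‖) Filter.atTop Filter.atTop := by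
  classical
  by_contra hcon
  -- the solution is eventually bounded
  obtain ⟨N, hN⟩ : ∃ N : ℕ, ∀ t : ℝ, (N : ℝ) ≤ t → ‖l t‖ ≤ N := by
    by_contra h
    push Not at h
    choose tn h1 h2 using h
    exact hcon ⟨tn, tendsto_atTop_mono h1 tendsto_natCast_atTop_atTop,
      tendsto_atTop_mono (fun n => (h2 n).le) tendsto_natCast_atTop_atTop⟩
  have hN0 : (0:ℝ) ≤ N := Nat.cast_nonneg N
  have hcont : ∀ b : ℝ, (N:ℝ) ≤ b → ContinuousOn l (uIcc (N:ℝ) b) := by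
    intro b hb t ht
    rw [uIcc_of_le hb] at ht
    exact (hflow t (hN0.trans ht.1)).continuousAt.continuousWithinAt
  have hconte : ∀ b : ℝ, (N:ℝ) ≤ b → ∀ e, ContinuousOn (fun t => l t e) (uIcc (N:ℝ) b) :=
    fun b hb e => (continuous_apply e).comp_continuousOn (hcont b hb)
  -- time averages
  let ω : ℕ → E → ℝ := fun n e => (∫ t in (N:ℝ)..(N + (n + 1)), l t e) / (n + 1)
  have hω : ∀ n, ω n ∈ Metric.closedBall (0 : E → ℝ) N := by
    intro n
    have hn : (0:ℝ) < n + 1 := by positivity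
    rw [mem_closedBall_zero_iff, pi_norm_le_iff_of_nonneg hN0]
    intro e
    have := intervalIntegral.norm_integral_le_of_norm_le_const (a := (N:ℝ)) (b := N + (n + 1))
      (C := N) (f := fun t => l t e) (by
        intro t ht
        rw [uIoc_of_le (by linarith)] at ht
        exact (norm_le_pi_norm (l t) e).trans (hN t ht.1.le))
    simp only [ω]
    rw [norm_div, Real.norm_of_nonneg hn.le, div_le_iff₀ hn]
    refine this.trans (le_of_eq ?_)
    rw [add_sub_cancel_left, abs_of_pos hn]
  obtain ⟨w, -, φ, hφ, hlim⟩ := (isCompact_closedBall (0 : E → ℝ) (N:ℝ)).tendsto_subseq hω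
  -- the averaged inequality
  have hineq : ∀ (y : E → ℝ) (n : ℕ), -(∑ e, (l N e - y e) ^ 2 / 2) / (n + 1) ≤
      ∑ e, Ric glue y e * (ω n e - y e) := by
    intro y n
    have hn : (0:ℝ) < n + 1 := by positivity
    have hle : (N:ℝ) ≤ N + (n + 1) := by linarith
    have hde : ∀ t ∈ uIcc (N:ℝ) (N + (n + 1)), HasDerivAt (fun t => ∑ e, (l t e - y e) ^ 2 / 2)
        (∑ e, Ric glue (l t) e * (l t e - y e)) t := by
      intro t ht
      rw [uIcc_of_le hle] at ht
      refine HasDerivAt.fun_sum fun e _ => ?_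
      have h1 := (hasDerivAt_pi.1 (hflow t (hN0.trans ht.1)) e)
      have h2 := ((h1.sub_const (y e)).fun_pow 2).div_const 2
      refine h2.congr_deriv ?_
      push_cast
      ring
    have hc1 : ContinuousOn (fun t => ∑ e, Ric glue (l t) e * (l t e - y e))
        (uIcc (N:ℝ) (N + (n + 1))) := by
      refine continuousOn_finsetSum _ fun e _ => ContinuousOn.mul ?_ ?_
      · exact ((continuous_apply e).comp (continuous_Ric glue)).comp_continuousOn (hcont _ hle)
      · exact (hconte _ hle e).sub continuousOn_const
    have hc3 : ∀ e, ContinuousOn (fun t => Ric glue y e * (l t e - y e))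
        (uIcc (N:ℝ) (N + (n + 1))) :=
      fun e => continuousOn_const.mul ((hconte _ hle e).sub continuousOn_const)
    have hc2 : ContinuousOn (fun t => ∑ e, Ric glue y e * (l t e - y e))
        (uIcc (N:ℝ) (N + (n + 1))) := continuousOn_finsetSum _ fun e _ => hc3 e
    have hftc := intervalIntegral.integral_eq_sub_of_hasDerivAt hde hc1.intervalIntegrable
    have hmono := intervalIntegral.integral_mono_on (μ := MeasureTheory.volume) hle hc1.intervalIntegrable
      hc2.intervalIntegrable (fun t _ => Ric_mono glue (l t) y)
    have heval : (∫ t in (N:ℝ)..(N + (n + 1)), ∑ e, Ric glue y e * (l t e - y e)) =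
        (n + 1) * ∑ e, Ric glue y e * (ω n e - y e) := by
      rw [intervalIntegral.integral_finsetSum fun e _ => (hc3 e).intervalIntegrable,
        Finset.mul_sum]
      refine Finset.sum_congr rfl fun e _ => ?_
      rw [intervalIntegral.integral_const_mul, intervalIntegral.integral_sub
        (hconte _ hle e).intervalIntegrable intervalIntegrable_const,
        intervalIntegral.integral_const]
      simp only [ω, add_sub_cancel_left, smul_eq_mul]
      field_simp
    rw [hftc, heval] at hmono
    have hnn : 0 ≤ ∑ e, (l (N + (n + 1)) e - y e) ^ 2 / 2 :=
      Finset.sum_nonneg fun e _ => by positivity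
    rw [div_le_iff₀ hn]
    linarith
  -- pass to the limit
  have hvar : ∀ y : E → ℝ, 0 ≤ ∑ e, Ric glue y e * (w e - y e) := by
    intro y
    have h1 : Tendsto (fun n => ∑ e, Ric glue y e * (ω (φ n) e - y e)) atTop
        (nhds (∑ e, Ric glue y e * (w e - y e))) := by
      refine tendsto_finsetSum _ fun e _ => ?_
      exact ((tendsto_pi_nhds.1 hlim e).sub_const _).const_mul _
    have h2 : Tendsto (fun n : ℕ => -(∑ e, (l N e - y e) ^ 2 / 2) / ((φ n : ℝ) + 1)) atTop
        (nhds 0) := by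
      refine Tendsto.div_atTop tendsto_const_nhds ?_
      exact tendsto_atTop_add_const_right _ _
        (tendsto_natCast_atTop_atTop.comp hφ.tendsto_atTop)
    exact le_of_tendsto_of_tendsto' h2 h1 fun n => hineq y (φ n)
  -- Minty argument
  have hminty : 0 ≤ ∑ e, Ric glue w e * (-Ric glue w e) := by
    have hc : Continuous fun s : ℝ => ∑ e, Ric glue (w + s • Ric glue w) e * (-Ric glue w e) := by
      refine continuous_finsetSum _ fun e _ => Continuous.mul ?_ continuous_const
      refine ((continuous_apply e).comp (continuous_Ric glue)).comp ?_
      exact continuous_const.add (continuous_id.smul continuous_const)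
    have h0 : Tendsto (fun s : ℝ => ∑ e, Ric glue (w + s • Ric glue w) e * (-Ric glue w e))
        (nhdsWithin 0 (Ioi 0)) (nhds (∑ e, Ric glue w e * (-Ric glue w e))) := by
      have := (hc.tendsto 0).mono_left (nhdsWithin_le_nhds (s := Ioi (0:ℝ)))
      simpa using this
    refine ge_of_tendsto h0 ?_
    filter_upwards [self_mem_nhdsWithin] with s hs
    have hs : 0 < s := hs
    have h := hvar (w + s • Ric glue w)
    have e1 : ∑ e, Ric glue (w + s • Ric glue w) e * (w e - (w + s • Ric glue w) e) =
        s * ∑ e, Ric glue (w + s • Ric glue w) e * (-Ric glue w e) := by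
      rw [Finset.mul_sum]
      refine Finset.sum_congr rfl fun e _ => ?_
      rw [Pi.add_apply, Pi.smul_apply, smul_eq_mul]
      ring
    rw [e1] at h
    exact nonneg_of_mul_nonneg_right h hs
  apply hno
  refine ⟨w, fun e => ?_⟩
  have hz : ∑ e, Ric glue w e * Ric glue w e = 0 := by
    apply le_antisymm
    · simp only [mul_neg, Finset.sum_neg_distrib] at hminty
      linarith
    · exact Finset.sum_nonneg fun e _ => mul_self_nonneg _
  exact mul_self_eq_zero.1 ((Finset.sum_eq_zero_iff_of_nonneg
    (fun e _ => mul_self_nonneg _)).1 hz e (Finset.mem_univ e))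
end
end

section
/- Suppose (M,𝒯) is edge-transitive and there exists a zero-curvature generalized decorated metric l ∈ ℝ^E (K̃(l) = 0). Then the constant metric l̂ whose value at every edge is the average (1/|E|)·Σ_{e∈E} l_e is a zero-curvature decorated metric: l̂ ∈ 𝓛(M,𝒯) and K(l̂) = 0. -/
noncomputable section

open Real Set Filter

variable {T E : Type*}

theorem aux_arccos_sum (a b c : ℝ) (ha : 0 < a) (hb : 0 < b) (hc : 0 < c)
    (h1 : a < b + c) (h2 : b < a + c) (h3 : c < a + b) :
    Real.arccos ((b ^ 2 + c ^ 2 - a ^ 2) / (2 * b * c)) +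
    Real.arccos ((c ^ 2 + a ^ 2 - b ^ 2) / (2 * c * a)) +
    Real.arccos ((a ^ 2 + b ^ 2 - c ^ 2) / (2 * a * b)) = Real.pi := by
  set A := (b ^ 2 + c ^ 2 - a ^ 2) / (2 * b * c) with hA
  set B := (c ^ 2 + a ^ 2 - b ^ 2) / (2 * c * a) with hB
  set C := (a ^ 2 + b ^ 2 - c ^ 2) / (2 * a * b) with hC
  set D := (a + b + c) * (b + c - a) * (a + c - b) * (a + b - c) with hD
  have hDpos : 0 < D := by
    have := sub_pos.2 h1
    have := sub_pos.2 h2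
    have := sub_pos.2 h3
    positivity
  have eA : 1 - A ^ 2 = D / (2 * b * c) ^ 2 := by
    rw [hA, hD]; field_simp; ring
  have eB : 1 - B ^ 2 = D / (2 * c * a) ^ 2 := by
    rw [hB, hD]; field_simp; ring
  have eC : C + A * B = D / ((2 * b * c) * (2 * c * a)) := by
    rw [hA, hB, hC, hD]; field_simp; ring
  have hA1 : A ^ 2 ≤ 1 := by
    have : 0 ≤ 1 - A ^ 2 := by rw [eA]; positivity
    linarith
  have hB1 : B ^ 2 ≤ 1 := by
    have : 0 ≤ 1 - B ^ 2 := by rw [eB]; positivity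
    linarith
  have hA2 := abs_le.1 ((sq_le_one_iff_abs_le_one A).1 hA1)
  have hB2 := abs_le.1 ((sq_le_one_iff_abs_le_one B).1 hB1)
  have hAB : -B ≤ A := by
    have : A + B = (a + b) * ((c + a - b) * (c + b - a)) / (2 * a * b * c) := by
      rw [hA, hB]; field_simp; ring
    have h4 : 0 < c + a - b := by linarith
    have h5 : 0 < c + b - a := by linarith
    have : 0 < A + B := by rw [this]; positivity
    linarith
  have hs : Real.sqrt (1 - A ^ 2) * Real.sqrt (1 - B ^ 2) = C + A * B := by
    rw [eA, eB, eC, Real.sqrt_div hDpos.le, Real.sqrt_div hDpos.le,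
      Real.sqrt_sq (by positivity), Real.sqrt_sq (by positivity), div_mul_div_comm,
      Real.mul_self_sqrt hDpos.le]
  have hle : Real.arccos A + Real.arccos B ≤ Real.pi := by
    have := Real.arccos_le_arccos hAB
    rw [Real.arccos_neg] at this
    linarith
  have hcos : Real.cos (Real.pi - (Real.arccos A + Real.arccos B)) = C := by
    rw [Real.cos_pi_sub, Real.cos_add, Real.cos_arccos hA2.1 hA2.2,
      Real.cos_arccos hB2.1 hB2.2, Real.sin_arccos, Real.sin_arccos, hs]
    ring
  rw [← hcos, Real.arccos_cos (by linarith)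
    (by linarith [Real.arccos_nonneg A, Real.arccos_nonneg B])]
  ring

theorem aux_genAngle_sum (x : Fin 3 → ℝ) (hx : ∀ i, 0 < x i) :
    genAngle x 0 + genAngle x 1 + genAngle x 2 = Real.pi := by
  have h0 := hx 0
  have h1 := hx 1
  have h2 := hx 2
  have e1 : (1 : Fin 3) + 1 = 2 := rfl
  have e2 : (1 : Fin 3) + 2 = 0 := rfl
  have e3 : (2 : Fin 3) + 1 = 0 := rfl
  have e4 : (2 : Fin 3) + 2 = 1 := rfl
  simp only [genAngle, zero_add, e1, e2, e3, e4]
  by_cases c0 : x 1 + x 2 ≤ x 0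
  · rw [if_pos c0, if_neg (by linarith), if_pos (Or.inr (by linarith)),
      if_neg (by linarith), if_pos (Or.inl (by linarith))]
    ring
  by_cases c1 : x 2 + x 0 ≤ x 1
  · rw [if_neg c0, if_pos (Or.inl (by linarith)), if_pos c1,
      if_neg (by linarith), if_pos (Or.inr (by linarith))]
    ring
  by_cases c2 : x 0 + x 1 ≤ x 2
  · rw [if_neg c0, if_pos (Or.inr (by linarith)), if_neg c1, if_pos (Or.inl (by linarith)),
      if_pos c2]
    ring
  push Not at c0 c1 c2
  rw [if_neg (by linarith), if_neg (by rintro (h | h) <;> linarith),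
    if_neg (by linarith), if_neg (by rintro (h | h) <;> linarith),
    if_neg (by linarith), if_neg (by rintro (h | h) <;> linarith)]
  exact aux_arccos_sum (x 0) (x 1) (x 2) h0 h1 h2 c0 (by linarith) c2

theorem aux_dihedral_sum (l : Fin 6 → ℝ) : ∑ p : Fin 6, dihedral l p = 2 * Real.pi := by
  have h := aux_genAngle_sum (triSides l) (by
    intro i; unfold triSides; split_ifs <;> positivity)
  have q0 : quadIndex 0 = 0 := rfl
  have q1 : quadIndex 1 = 1 := rfl
  have q2 : quadIndex 2 = 2 := rfl
  have q3 : quadIndex 3 = 2 := rfl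
  have q4 : quadIndex 4 = 1 := rfl
  have q5 : quadIndex 5 = 0 := rfl
  simp only [Fin.sum_univ_six, dihedral, q0, q1, q2, q3, q4, q5]
  linarith

theorem aux_triSides_const (c : ℝ) (k : Fin 3) : triSides (fun _ => c) k = Real.exp c := by
  unfold triSides
  split_ifs <;> congr 1 <;> ring

theorem aux_dihedral_const (c : ℝ) (p : Fin 6) : dihedral (fun _ => c) p = Real.pi / 3 := by
  have key : ∀ i j, genAngle (triSides (fun _ => c)) i = genAngle (triSides (fun _ => c)) j := by
    intro i j
    simp only [genAngle, aux_triSides_const]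
  have h := aux_genAngle_sum (triSides (fun _ => c)) (by
    intro i; rw [aux_triSides_const]; positivity)
  unfold dihedral
  rw [key 1 0, key 2 0] at h
  rw [key _ 0]
  linarith

theorem aux_edgeOf_endPts (p : Fin 6) :
    edgeOf (endPts p).1 (endPts p).2 = p ∧ (endPts p).1 ≠ (endPts p).2 := by
  revert p; decide

theorem aux_inj (r : Fin 4 ≃ Fin 4) : Function.Injective
    (fun p : Fin 6 => edgeOf (r (endPts p).1) (r (endPts p).2)) := by
  have inv : ∀ i j : Fin 4, i ≠ j → (endPts (edgeOf i j) = (i, j) ∨ endPts (edgeOf i j) = (j, i)) := by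
    decide
  have symm : ∀ i j : Fin 4, i ≠ j → edgeOf i j = edgeOf j i := by decide
  intro p q h
  simp only at h
  obtain ⟨hp, hp'⟩ := aux_edgeOf_endPts p
  obtain ⟨hq, hq'⟩ := aux_edgeOf_endPts q
  have h1 := inv _ _ (fun e => hp' (r.injective e))
  have h2 := inv _ _ (fun e => hq' (r.injective e))
  rw [← h] at h2
  rw [← hp, ← hq]
  have := symm _ _ hp'
  rcases h1 with h1 | h1 <;> rcases h2 with h2 | h2 <;> rw [h1] at h2 <;>
    simp only [Prod.mk.injEq, EmbeddingLike.apply_eq_iff_eq] at h2 <;>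
    obtain ⟨h3, h4⟩ := h2 <;> first | (rw [h3, h4]; done) | (rw [this, h3, h4]; done)

theorem aux_valence [Fintype T] [DecidableEq E]
    (glue : T → Fin 6 → E) (htr : EdgeTransitive glue) (e e' : E) :
    valence glue e' = valence glue e := by
  obtain ⟨φ, ψ, ρ, h, rfl⟩ := htr e e'
  unfold valence
  rw [← Equiv.sum_comp φ]
  refine Finset.sum_congr rfl fun σ _ => ?_
  have hb : Function.Bijective
      (fun p : Fin 6 => edgeOf (ρ σ (endPts p).1) (ρ σ (endPts p).2)) :=
    Finite.injective_iff_bijective.1 (aux_inj (ρ σ))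
  rw [← Equiv.sum_comp (Equiv.ofBijective _ hb)]
  refine Finset.sum_congr rfl fun p _ => ?_
  obtain ⟨hp, hp'⟩ := aux_edgeOf_endPts p
  have h' := h σ _ _ hp'
  rw [hp] at h'
  simp only [Equiv.ofBijective_apply, h', EmbeddingLike.apply_eq_iff_eq]

theorem aux_sum_swap [Fintype T] [Fintype E] [DecidableEq E] {R : Type*} [AddCommMonoid R]
    (glue : T → Fin 6 → E) (f : T → Fin 6 → R) :
    ∑ e : E, ∑ σ : T, ∑ p : Fin 6, (if glue σ p = e then f σ p else 0) =
      ∑ σ : T, ∑ p : Fin 6, f σ p := by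
  rw [Finset.sum_comm]
  refine Finset.sum_congr rfl fun σ _ => ?_
  rw [Finset.sum_comm]
  refine Finset.sum_congr rfl fun p _ => ?_
  simp

theorem aux_card [Fintype T] [Fintype E] [DecidableEq E]
    (glue : T → Fin 6 → E) (l : E → ℝ) (hl : ∀ e : E, Ric glue l e = 0) :
    Fintype.card E = Fintype.card T := by
  have h : ∑ e : E, Ric glue l e = 0 := Finset.sum_eq_zero fun e _ => hl e
  unfold Ric at h
  rw [Finset.sum_sub_distrib, aux_sum_swap] at h
  simp only [aux_dihedral_sum, Finset.sum_const, Finset.card_univ, nsmul_eq_mul] at h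
  rw [← sub_mul] at h
  have hpi := Real.pi_pos
  have : (Fintype.card E : ℝ) - Fintype.card T = 0 := by
    rcases mul_eq_zero.1 h with h | h
    · exact h
    · linarith
  exact_mod_cast sub_eq_zero.1 this

theorem aux_valence_six [Fintype T] [Fintype E] [DecidableEq E]
    (glue : T → Fin 6 → E) (htr : EdgeTransitive glue)
    (l : E → ℝ) (hl : ∀ e : E, Ric glue l e = 0) (e : E) : valence glue e = 6 := by
  have h1 : ∑ e : E, valence glue e = Fintype.card T * 6 := by
    unfold valence
    rw [aux_sum_swap glue (fun _ _ => 1)]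
    simp
  rw [Finset.sum_congr rfl fun e' _ => aux_valence glue htr e e'] at h1
  rw [← aux_card glue l hl, Finset.sum_const, Finset.card_univ, smul_eq_mul] at h1
  exact Nat.eq_of_mul_eq_mul_left (Fintype.card_pos_iff.2 ⟨e⟩) h1

/-- if `(M,𝒯)` is edge-transitive and carries a zero-curvature generalized
decorated metric `l`, then the constant metric with value the average of `l` is a
zero-curvature decorated metric. -/
theorem edge_transitive_average_zero_curvature
    [Fintype T] [Fintype E] [DecidableEq E] [Nonempty T]
    (glue : T → Fin 6 → E) (htr : EdgeTransitive glue)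
    (l : E → ℝ) (hl : ∀ e : E, Ric glue l e = 0) :
    (fun _ : E => (∑ e : E, l e) / (Fintype.card E : ℝ)) ∈ LMdom glue ∧
    ∀ e : E, Ric glue (fun _ : E => (∑ e' : E, l e') / (Fintype.card E : ℝ)) e = 0 := by
  generalize (∑ e : E, l e) / (Fintype.card E : ℝ) = c
  constructor
  · intro σ i
    have : pullback glue (fun _ : E => c) σ = fun _ => c := rfl
    rw [this]
    simp only [aux_triSides_const]
    linarith [Real.exp_pos c]
  · intro e
    have h6 := aux_valence_six glue htr l hl e
    have hp : ∀ σ, pullback glue (fun _ : E => c) σ = fun _ => c := fun _ => rfl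
    have h6' : ((valence glue e : ℕ) : ℝ) = 6 := by rw [h6]; norm_num
    unfold valence at h6'
    push_cast at h6'
    have : ∑ σ : T, ∑ p : Fin 6, (if glue σ p = e then Real.pi / 3 else 0) =
        (∑ σ : T, ∑ p : Fin 6, (if glue σ p = e then (1 : ℝ) else 0)) * (Real.pi / 3) := by
      simp only [Finset.sum_mul, ite_mul, one_mul, zero_mul]
    simp only [Ric, hp, aux_dihedral_const]
    rw [this, h6']
    ring
end
end
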